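/- Let the setting be type A_N or type B_N and let (i,k) ∈ X. Any two paths p, p′ ∈ P_{i,k} are connected by moves without cancellation: p can be obtained from p′ by a finite sequence of raising and lowering moves at points of W such that no point (j,ℓ) ∈ W occurs in the sequence both as the site of a raising move and as the site of a lowering move. -/

import Mathlib

namespace Paper

/-- The ambient setting: type `A N` (with `N ≥ 1`) or type `B N ε`
(with `N ≥ 2` and `0 < ε < 1/2`). -/
inductive Setting where
  | A (N : ℕ)
  | B (N : ℕ) (ε : ℝ)

namespace Setting

/-- The rank `N`. -/
def N : Setting → ℕ
  | A n => n
  | B n _ => n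

/-- Validity of the parameters of the setting. -/
def valid : Setting → Prop
  | A n => 1 ≤ n
  | B n ε => 2 ≤ n ∧ 0 < ε ∧ ε < 1 / 2

end Setting

/-- The numbers `r_i` : in type A all equal `1`; in type B, `r_N = 1` and `r_i = 2` for `i < N`. -/
def rr : Setting → ℕ → ℕ
  | .A _, _ => 1
  | .B n _, j => if j = n then 1 else 2

/-- The set `X` in type `A_N`. -/
def XA (n : ℕ) : Set (ℕ × ℤ) :=
  {ik | 1 ≤ ik.1 ∧ ik.1 ≤ n ∧ ((ik.1 : ℤ) - ik.2) % 2 = 1}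

/-- The set `X` in type `B_N`. -/
def XB (n : ℕ) : Set (ℕ × ℤ) :=
  {ik | (ik.1 = n ∧ ik.2 % 2 = 1) ∨ (1 ≤ ik.1 ∧ ik.1 < n ∧ ik.2 % 2 = 0)}

/-- The set `X ⊆ I × ℤ`. -/
def X : Setting → Set (ℕ × ℤ)
  | .A n => XA n
  | .B n _ => XB n

/-- The set `W = {(i,k) : (i, k - r_i) ∈ X}`. -/
def W (S : Setting) : Set (ℕ × ℤ) :=
  {ik | (ik.1, ik.2 - (rr S ik.1 : ℤ)) ∈ X S}

/-- The `r`-th point of a path (a finite list of points of the plane). -/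
def pt (p : List (ℝ × ℝ)) (r : ℕ) : ℝ × ℝ := p.getD r (0, 0)

/-- The set of paths `𝒫_{i,k}` in type `A_N`. -/
def pathsA (n : ℕ) (i : ℕ) (k : ℤ) : Set (List (ℝ × ℝ)) :=
  {p | p.length = n + 2 ∧
    (∀ r, r < n + 2 → (pt p r).1 = (r : ℝ)) ∧
    (pt p 0).2 = (i : ℝ) + (k : ℝ) ∧
    (pt p (n + 1)).2 = (n : ℝ) + 1 - (i : ℝ) + (k : ℝ) ∧
    (∀ r, r ≤ n → (pt p (r + 1)).2 - (pt p r).2 = 1 ∨ (pt p (r + 1)).2 - (pt p r).2 = -1)}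

/-- The set of paths `𝒫_{N,ℓ}` in type `B_N`. -/
def pathsBspin (n : ℕ) (ε : ℝ) (l : ℤ) : Set (List (ℝ × ℝ)) :=
  {p | p.length = n + 1 ∧
    (if l % 4 = 3 then ∀ r, r < n → (pt p r).1 = 2 * (r : ℝ)
     else ∀ r, r < n → (pt p r).1 = 4 * (n : ℝ) - 2 - 2 * (r : ℝ)) ∧
    (pt p n).1 = 2 * (n : ℝ) - 1 ∧
    (pt p 0).2 = (l : ℝ) + 2 * (n : ℝ) - 1 ∧
    (∀ r, r + 2 ≤ n → (pt p (r + 1)).2 - (pt p r).2 = 2 ∨ (pt p (r + 1)).2 - (pt p r).2 = -2) ∧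
    ((pt p n).2 - (pt p (n - 1)).2 = 1 + ε ∨ (pt p n).2 - (pt p (n - 1)).2 = -(1 + ε))}

/-- The set of paths `𝒫_{i,k}` in type `B_N`. -/
def pathsB (n : ℕ) (ε : ℝ) (i : ℕ) (k : ℤ) : Set (List (ℝ × ℝ)) :=
  if i = n then pathsBspin n ε k
  else {p | ∃ a b : List (ℝ × ℝ),
    a ∈ pathsBspin n ε (k - (2 * (n : ℤ) - 2 * (i : ℤ) - 1)) ∧
    b ∈ pathsBspin n ε (k + (2 * (n : ℤ) - 2 * (i : ℤ) - 1)) ∧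
    p = a ++ b.reverse ∧
    (pt a n).1 = (pt b n).1 ∧ 0 < (pt a n).2 - (pt b n).2}

/-- The set of paths `𝒫_{i,k}`. -/
def P : Setting → ℕ → ℤ → Set (List (ℝ × ℝ))
  | .A n => pathsA n
  | .B n ε => pathsB n ε

/-- The map `ι : X → ℤ × ℤ` of type `B_N`. -/
def iotaB (n : ℕ) (ik : ℕ × ℤ) : ℤ × ℤ :=
  if ik.1 = n then (2 * (n : ℤ) - 1, ik.2)
  else if (2 * (n : ℤ) + ik.2 - 2 * (ik.1 : ℤ)) % 4 = 2 then (2 * (ik.1 : ℤ), ik.2)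
  else (4 * (n : ℤ) - 2 - 2 * (ik.1 : ℤ), ik.2)

/-- The corners of a path: `Cp S p true` is the set `C_{p,+}` of upper corners, and
`Cp S p false` is the set `C_{p,-}` of lower corners. -/
def Cp (S : Setting) (p : List (ℝ × ℝ)) (up : Bool) : Set (ℕ × ℤ) :=
  match S with
  | .A n =>
    {jl | 1 ≤ jl.1 ∧ jl.1 ≤ n ∧
      pt p jl.1 = ((jl.1 : ℝ), (jl.2 : ℝ)) ∧
      (pt p (jl.1 - 1)).2 = (jl.2 : ℝ) + (if up then 1 else -1) ∧
      (pt p (jl.1 + 1)).2 = (jl.2 : ℝ) + (if up then 1 else -1)}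
  | .B n ε =>
    {jl | jl ∈ XB n ∧
      ((∃ r : ℕ, 1 ≤ r ∧ r + 1 < p.length ∧
          pt p r = (((iotaB n jl).1 : ℝ), ((iotaB n jl).2 : ℝ)) ∧
          (iotaB n jl).1 ≠ 0 ∧ (iotaB n jl).1 ≠ 2 * (n : ℤ) - 1 ∧
          (iotaB n jl).1 ≠ 4 * (n : ℤ) - 2 ∧
          (if up then (pt p r).2 < (pt p (r - 1)).2 ∧ (pt p r).2 < (pt p (r + 1)).2
           else (pt p (r - 1)).2 < (pt p r).2 ∧ (pt p (r + 1)).2 < (pt p r).2))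
       ∨ (jl.1 = n ∧
          (if up then (2 * (n : ℝ) - 1, (jl.2 : ℝ) - ε) ∈ p ∧ (2 * (n : ℝ) - 1, (jl.2 : ℝ) + ε) ∉ p
           else (2 * (n : ℝ) - 1, (jl.2 : ℝ) + ε) ∈ p ∧ (2 * (n : ℝ) - 1, (jl.2 : ℝ) - ε) ∉ p)))}

/-- `p'` is obtained from `p` by replacing the point `q` by the point `q'`. -/
def Replace1 (p p' : List (ℝ × ℝ)) (q q' : ℝ × ℝ) : Prop :=
  ∃ r : ℕ, r < p.length ∧ pt p r = q ∧ p'.length = p.length ∧ pt p' r = q' ∧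
    ∀ s, s < p.length → s ≠ r → pt p' s = pt p s

/-- `p'` is obtained from `p` by replacing the point `q1` by `q1'` and the point `q2` by `q2'`. -/
def Replace2 (p p' : List (ℝ × ℝ)) (q1 q1' q2 q2' : ℝ × ℝ) : Prop :=
  ∃ r s : ℕ, r < p.length ∧ s < p.length ∧ r ≠ s ∧ pt p r = q1 ∧ pt p s = q2 ∧
    p'.length = p.length ∧ pt p' r = q1' ∧ pt p' s = q2' ∧
    ∀ u, u < p.length → u ≠ r → u ≠ s → pt p' u = pt p u

/-- The path `p` can be lowered at `(j, l)`: `(j, l - r_j) ∈ C_{p,+}` and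
`(j, l + r_j) ∉ C_{p,+}`. -/
def CanLower (S : Setting) (p : List (ℝ × ℝ)) (j : ℕ) (l : ℤ) : Prop :=
  (j, l - (rr S j : ℤ)) ∈ Cp S p true ∧ (j, l + (rr S j : ℤ)) ∉ Cp S p true

/-- `p'` is the result of the lowering move at `(j,l)` applied to the path `p ∈ 𝒫_{i,k}`;
written `p' = p 𝒜_{j,l}⁻¹`. -/
def LoweredTo (S : Setting) (i : ℕ) (k : ℤ) (j : ℕ) (l : ℤ)
    (p p' : List (ℝ × ℝ)) : Prop :=
  p ∈ P S i k ∧ p' ∈ P S i k ∧ CanLower S p j l ∧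
  (match S with
   | .A _ => Replace1 p p' ((j : ℝ), (l : ℝ) - 1) ((j : ℝ), (l : ℝ) + 1)
   | .B n ε =>
     if j = n then
       Replace1 p p' (2 * (n : ℝ) - 1, (l : ℝ) - 1 - ε) (2 * (n : ℝ) - 1, (l : ℝ) + 1 + ε)
     else if j = n - 1 then
       Replace2 p p'
         (((iotaB n (j, l - 2)).1 : ℝ), (l : ℝ) - 2) (((iotaB n (j, l - 2)).1 : ℝ), (l : ℝ) + 2)
         (2 * (n : ℝ) - 1, (l : ℝ) - 1 + ε) (2 * (n : ℝ) - 1, (l : ℝ) + 1 - ε)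
     else
       Replace1 p p'
         (((iotaB n (j, l - 2)).1 : ℝ), (l : ℝ) - 2) (((iotaB n (j, l - 2)).1 : ℝ), (l : ℝ) + 2))

/-- The path `p` can be raised at `(j,l)`: it is of the form `p' 𝒜_{j,l}⁻¹`. -/
def CanRaise (S : Setting) (i : ℕ) (k : ℤ) (p : List (ℝ × ℝ)) (j : ℕ) (l : ℤ) : Prop :=
  ∃ p', LoweredTo S i k j l p' p

/-- The monomial group `ℳ`, realised as exponent functions: the free abelian group on the
symbols `Y_{i,k}`, `(i,k) ∈ X`, is identified with finitely supported functions `(ℕ × ℤ) → ℤ`,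
written additively. -/
def Y (x : ℕ × ℤ) : (ℕ × ℤ) → ℤ := fun z => if z = x then 1 else 0

noncomputable def ind (s : Prop) : ℤ := @ite ℤ s (Classical.propDecidable s) 1 0

/-- The monomial `m(p)` of a path: `∏ Y_{j,l}` over upper corners times `∏ Y_{j,l}⁻¹`
over lower corners. -/
noncomputable def mon (S : Setting) (p : List (ℝ × ℝ)) : (ℕ × ℤ) → ℤ :=
  fun x => ind (x ∈ Cp S p true) - ind (x ∈ Cp S p false)

/-- The monomials `A_{j,l}`, with the conventions `Y_{0,·} = Y_{N+1,·} = 1`. -/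
def Amon (S : Setting) (j : ℕ) (l : ℤ) : (ℕ × ℤ) → ℤ :=
  match S with
  | .A n =>
      Y (j, l + 1) + Y (j, l - 1) - (if j = 1 then 0 else Y (j - 1, l))
        - (if j = n then 0 else Y (j + 1, l))
  | .B n _ =>
      if j = n then Y (n, l + 1) + Y (n, l - 1) - Y (n - 1, l)
      else if j = n - 1 then
        Y (n - 1, l + 2) + Y (n - 1, l - 2) - (if j = 1 then 0 else Y (n - 2, l))
          - Y (n, l + 1) - Y (n, l - 1)
      else
        Y (j, l + 2) + Y (j, l - 2) - (if j = 1 then 0 else Y (j - 1, l)) - Y (j + 1, l)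

/-- A monomial is dominant iff all its exponents are nonnegative. -/
def Dominant (m : (ℕ × ℤ) → ℤ) : Prop := ∀ x, 0 ≤ m x

/-- A monomial is anti-dominant iff all its exponents are nonpositive. -/
def AntiDominant (m : (ℕ × ℤ) → ℤ) : Prop := ∀ x, m x ≤ 0

/-- `(i',k')` is in snake position with respect to `(i,k)`. -/
def SnakePos : Setting → ℕ × ℤ → ℕ × ℤ → Prop
  | .A _, ik, ik' => |(ik'.1 : ℤ) - (ik.1 : ℤ)| + 2 ≤ ik'.2 - ik.2
  | .B n _, ik, ik' =>
      if ik.1 = n ∧ ik'.1 = n then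
        2 ≤ ik'.2 - ik.2 ∧ (ik'.2 - ik.2) % 4 = 2
      else if ik.1 = n ∨ ik'.1 = n then
        2 * |(ik'.1 : ℤ) - (ik.1 : ℤ)| + 3 ≤ ik'.2 - ik.2 ∧
          (ik'.2 - ik.2) % 4 = (2 * |(ik'.1 : ℤ) - (ik.1 : ℤ)| - 1) % 4
      else
        2 * |(ik'.1 : ℤ) - (ik.1 : ℤ)| + 4 ≤ ik'.2 - ik.2 ∧
          (ik'.2 - ik.2) % 4 = (2 * |(ik'.1 : ℤ) - (ik.1 : ℤ)|) % 4

/-- A snake: a sequence of points of `X`, each in snake position w.r.t. the previous one. -/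
def IsSnake (S : Setting) {T : ℕ} (w : Fin T → ℕ × ℤ) : Prop :=
  (∀ t, w t ∈ X S) ∧
  ∀ (t : Fin T) (h : (t : ℕ) + 1 < T), SnakePos S (w t) (w ⟨(t : ℕ) + 1, h⟩)

/-- `p` is strictly above `p'`. -/
def StrictlyAbove (p p' : List (ℝ × ℝ)) : Prop :=
  ∀ a ∈ p, ∀ b ∈ p', a.1 = b.1 → a.2 < b.2

/-- A tuple of paths is non-overlapping. -/
def NonOverlapping {T : ℕ} (ps : Fin T → List (ℝ × ℝ)) : Prop :=
  ∀ s t : Fin T, s < t → StrictlyAbove (ps s) (ps t)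

/-- The set `𝒫̄` of non-overlapping tuples of paths attached to a snake. -/
def PBar (S : Setting) {T : ℕ} (w : Fin T → ℕ × ℤ) : Set (Fin T → List (ℝ × ℝ)) :=
  {ps | (∀ t, ps t ∈ P S (w t).1 (w t).2) ∧ NonOverlapping ps}

/-- The product `∏_t m(p_t)` of the monomials of a tuple of paths. -/
noncomputable def tmon (S : Setting) {T : ℕ} (ps : Fin T → List (ℝ × ℝ)) : (ℕ × ℤ) → ℤ :=
  ∑ t, mon S (ps t)

/-- Lowering move at `jl` on a tuple of paths: one component is lowered, the others
are unchanged. -/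
def TLoweredTo (S : Setting) {T : ℕ} (w : Fin T → ℕ × ℤ) (jl : ℕ × ℤ)
    (ps ps' : Fin T → List (ℝ × ℝ)) : Prop :=
  ∃ t, LoweredTo S (w t).1 (w t).2 jl.1 jl.2 (ps t) (ps' t) ∧ ∀ s, s ≠ t → ps' s = ps s

/-- Sequences of raising/lowering moves on a single path; the list records, for each move,
whether it was a lowering move (`true`) or a raising move (`false`), and its site. -/
inductive MoveSeq (S : Setting) (i : ℕ) (k : ℤ) :
    List (ℝ × ℝ) → List (ℝ × ℝ) → List (Bool × (ℕ × ℤ)) → Prop where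
  | nil (p : List (ℝ × ℝ)) : MoveSeq S i k p p []
  | lower {p q r : List (ℝ × ℝ)} {jl : ℕ × ℤ} {ms : List (Bool × (ℕ × ℤ))} :
      jl ∈ W S → LoweredTo S i k jl.1 jl.2 p q → MoveSeq S i k q r ms →
      MoveSeq S i k p r ((true, jl) :: ms)
  | raise {p q r : List (ℝ × ℝ)} {jl : ℕ × ℤ} {ms : List (Bool × (ℕ × ℤ))} :
      jl ∈ W S → LoweredTo S i k jl.1 jl.2 q p → MoveSeq S i k q r ms →
      MoveSeq S i k p r ((false, jl) :: ms)

/-- Sequences of raising/lowering moves on tuples of paths, all of whose intermediate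
tuples are non-overlapping. -/
inductive TMoveSeq (S : Setting) {T : ℕ} (w : Fin T → ℕ × ℤ) :
    (Fin T → List (ℝ × ℝ)) → (Fin T → List (ℝ × ℝ)) → List (Bool × (ℕ × ℤ)) → Prop where
  | nil (ps : Fin T → List (ℝ × ℝ)) : TMoveSeq S w ps ps []
  | lower {ps qs rs : Fin T → List (ℝ × ℝ)} {jl : ℕ × ℤ} {ms : List (Bool × (ℕ × ℤ))} :
      jl ∈ W S → TLoweredTo S w jl ps qs → NonOverlapping qs →
      TMoveSeq S w qs rs ms → TMoveSeq S w ps rs ((true, jl) :: ms)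
  | raise {ps qs rs : Fin T → List (ℝ × ℝ)} {jl : ℕ × ℤ} {ms : List (Bool × (ℕ × ℤ))} :
      jl ∈ W S → TLoweredTo S w jl qs ps → NonOverlapping qs →
      TMoveSeq S w qs rs ms → TMoveSeq S w ps rs ((false, jl) :: ms)

/-- Sequences of lowering moves on tuples of paths, all of whose intermediate tuples
are non-overlapping; the list records the sites, in order. -/
inductive TLowerSeq (S : Setting) {T : ℕ} (w : Fin T → ℕ × ℤ) :
    (Fin T → List (ℝ × ℝ)) → (Fin T → List (ℝ × ℝ)) → List (ℕ × ℤ) → Prop where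
  | nil (ps : Fin T → List (ℝ × ℝ)) : TLowerSeq S w ps ps []
  | cons {ps qs rs : Fin T → List (ℝ × ℝ)} {jl : ℕ × ℤ} {ms : List (ℕ × ℤ)} :
      jl ∈ W S → TLoweredTo S w jl ps qs → NonOverlapping qs →
      TLowerSeq S w qs rs ms → TLowerSeq S w ps rs (jl :: ms)

/-- Weak order on paths with the same x-coordinates: `p` is weakly above `p'`. -/
def WeaklyAbove (p p' : List (ℝ × ℝ)) : Prop :=
  p.length = p'.length ∧ ∀ r, r < p.length → (pt p r).2 ≤ (pt p' r).2

/-- `p` is weakly below `p'`. -/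
def WeaklyBelow (p p' : List (ℝ × ℝ)) : Prop :=
  p.length = p'.length ∧ ∀ r, r < p.length → (pt p' r).2 ≤ (pt p r).2

/-- The path `top(p, p')`. -/
def topPath (p p' : List (ℝ × ℝ)) : List (ℝ × ℝ) :=
  List.zipWith (fun a b => (a.1, min a.2 b.2)) p p'

/-- The distinguished point contained in the highest path `p⁺_{i,k}`. -/
def highPoint : Setting → ℕ → ℤ → ℝ × ℝ
  | .A _, i, k => ((i : ℝ), (k : ℝ))
  | .B n ε, i, k =>
      if i = n then (2 * (n : ℝ) - 1, (k : ℝ) - ε)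
      else (((iotaB n (i, k)).1 : ℝ), ((iotaB n (i, k)).2 : ℝ))

/-- The distinguished point contained in the lowest path `p⁻_{i,k}`. -/
def lowPoint : Setting → ℕ → ℤ → ℝ × ℝ
  | .A n, i, k => ((n : ℝ) + 1 - (i : ℝ), (k : ℝ) + (n : ℝ) + 1)
  | .B n ε, i, k =>
      if i = n then (2 * (n : ℝ) - 1, (k : ℝ) + 4 * (n : ℝ) - 2 + ε)
      else (((iotaB n (i, k + 4 * (n : ℤ) - 2)).1 : ℝ),
            ((iotaB n (i, k + 4 * (n : ℤ) - 2)).2 : ℝ))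

/-- The highest path `p⁺_{i,k}` : the path of `𝒫_{i,k}` with no lower corners. -/
noncomputable def highestPath (S : Setting) (i : ℕ) (k : ℤ) : List (ℝ × ℝ) :=
  Classical.epsilon fun p => p ∈ P S i k ∧ Cp S p false = ∅

/-- The lowest path `p⁻_{i,k}` : the path of `𝒫_{i,k}` with no upper corners. -/
noncomputable def lowestPath (S : Setting) (i : ℕ) (k : ℤ) : List (ℝ × ℝ) :=
  Classical.epsilon fun p => p ∈ P S i k ∧ Cp S p true = ∅


/-! Heights increase downwards. Every point of `top(p, p')` lies on `p` or on `p'`, and a path `p`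
weakly above a path `q ≠ p` can be lowered without overshooting `q`: among the points at which they
differ, the highest point of `p` is an upper corner. As each move descends by at least one unit at
some point, `p` reaches `q` by lowering moves only, and the site of each of them lies between `p`
and `q` in its column. Hence `p'` is raised to `top(p, p')`, which is then lowered to `p`; a site
used twice would lie strictly below `top(p, p')` and strictly above both `p` and `p'`.

In type B with `i < N` a path consists of two branches, and the left one ends below the right one in
the central column. Lowering the left branch to its target before touching the right one preserves
this, and reversing the path exchanges the roles of the branches. -/

/-! ### Points of a path -/

section Points

variable {p q a a' b b' : List (ℝ × ℝ)} {r s : ℕ}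

theorem pt_eq_getElem (h : r < p.length) : pt p r = p[r] :=
  List.getD_eq_getElem p (0, 0) h

theorem pt_of_length_le (h : p.length ≤ r) : pt p r = (0, 0) :=
  List.getD_eq_default p (0, 0) h

theorem ext_pt (hlen : p.length = q.length) (h : ∀ r < p.length, pt p r = pt q r) :
    p = q :=
  List.ext_getElem hlen fun r hp hq => by
    rw [← pt_eq_getElem hp, ← pt_eq_getElem hq, h r hp]

theorem mem_iff_exists_pt {u : ℝ × ℝ} : u ∈ p ↔ ∃ r < p.length, pt p r = u := by
  rw [List.mem_iff_getElem]
  exact exists_congr fun r =>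
    ⟨fun ⟨h, e⟩ => ⟨h, (pt_eq_getElem h).trans e⟩,
      fun ⟨h, e⟩ => ⟨h, (pt_eq_getElem h).symm.trans e⟩⟩

theorem pt_append_left (h : r < a.length) : pt (a ++ b) r = pt a r :=
  List.getD_append a b (0, 0) r h

theorem pt_append_right (h : a.length ≤ r) : pt (a ++ b) r = pt b (r - a.length) :=
  List.getD_append_right a b (0, 0) r h

theorem pt_reverse (h : r < p.length) : pt p.reverse r = pt p (p.length - 1 - r) :=
  congrFun (List.getD_reverse r h) (0, 0)

theorem pt_reverse_sub (h : r < p.length) : pt p.reverse (p.length - 1 - r) = pt p r := by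
  rw [pt_reverse (by lia)]
  congr 1
  lia

theorem pt_set_self {u : ℝ × ℝ} (h : r < p.length) : pt (p.set r u) r = u := by
  rw [pt_eq_getElem (by simpa using h), List.getElem_set_self]

theorem pt_set_of_ne {u : ℝ × ℝ} (h : r ≠ s) : pt (p.set r u) s = pt p s := by
  unfold pt
  rw [List.getD_eq_getElem?_getD, List.getElem?_set_ne h, List.getD_eq_getElem?_getD]

theorem length_topPath (h : p.length = q.length) : (topPath p q).length = p.length := by
  rw [topPath, List.length_zipWith, ← h, min_self]

theorem pt_topPath (h : p.length = q.length) (r : ℕ) :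
    pt (topPath p q) r = ((pt p r).1, min (pt p r).2 (pt q r).2) := by
  rcases lt_or_ge r p.length with hr | hr
  · rw [pt_eq_getElem ((length_topPath h).symm ▸ hr), pt_eq_getElem hr, pt_eq_getElem (h ▸ hr)]
    exact List.getElem_zipWith
  · rw [pt_of_length_le ((length_topPath h).symm ▸ hr), pt_of_length_le hr,
      pt_of_length_le (h ▸ hr), min_self]

theorem topPath_append_reverse (ha : a.length = a'.length) (hb : b.length = b'.length) :
    topPath (a ++ b.reverse) (a' ++ b'.reverse) = topPath a a' ++ (topPath b b').reverse := by
  rw [topPath, List.zipWith_append ha, topPath, topPath, List.reverse_zipWith hb]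

namespace WeaklyAbove

theorem refl (p : List (ℝ × ℝ)) : WeaklyAbove p p := ⟨rfl, fun _ _ => le_rfl⟩

theorem le (h : WeaklyAbove p q) (r : ℕ) : (pt p r).2 ≤ (pt q r).2 := by
  rcases lt_or_ge r p.length with hr | hr
  · exact h.2 r hr
  · rw [pt_of_length_le hr, pt_of_length_le (h.1 ▸ hr)]

theorem reverse (h : WeaklyAbove p q) : WeaklyAbove p.reverse q.reverse := by
  refine ⟨by simpa using h.1, fun r hr => ?_⟩
  rw [List.length_reverse] at hr
  rw [pt_reverse hr, pt_reverse (h.1 ▸ hr), ← h.1]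
  exact h.le _

theorem append (ha : WeaklyAbove a a') (hb : WeaklyAbove b b') :
    WeaklyAbove (a ++ b) (a' ++ b') := by
  refine ⟨by simp only [List.length_append, ha.1, hb.1], fun r _ => ?_⟩
  rcases lt_or_ge r a.length with hr | hr
  · rw [pt_append_left hr, pt_append_left (ha.1 ▸ hr)]
    exact ha.le r
  · rw [pt_append_right hr, pt_append_right (ha.1 ▸ hr), ← ha.1]
    exact hb.le _

theorem of_append (h : WeaklyAbove (a ++ b) (a' ++ b')) (ha : a.length = a'.length) :
    WeaklyAbove a a' ∧ WeaklyAbove b b' := by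
  have hlen : b.length = b'.length := by
    have := h.1
    simp only [List.length_append] at this
    lia
  refine ⟨⟨ha, fun r hr => ?_⟩, hlen, fun r _ => ?_⟩
  · simpa only [pt_append_left hr, pt_append_left (ha ▸ hr)] using h.le r
  · simpa only [pt_append_right (Nat.le_add_right _ r), ← ha, Nat.add_sub_cancel_left,
      pt_append_right (ha ▸ Nat.le_add_right _ r : a'.length ≤ a.length + r)]
      using h.le (a.length + r)

theorem set_right {x y : ℝ} (hy : (pt p r).2 ≤ y) : WeaklyAbove p (p.set r (x, y)) := by
  refine ⟨List.length_set.symm, fun t ht => ?_⟩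
  rcases eq_or_ne r t with rfl | hne
  · rwa [pt_set_self ht]
  · rw [pt_set_of_ne hne]

theorem set_left {x y : ℝ} (h : WeaklyAbove p q) (hy : y ≤ (pt q r).2) :
    WeaklyAbove (p.set r (x, y)) q := by
  refine ⟨List.length_set.trans h.1, fun t ht => ?_⟩
  rw [List.length_set] at ht
  rcases eq_or_ne r t with rfl | hne
  · rwa [pt_set_self ht]
  · rw [pt_set_of_ne hne]
    exact h.le t

theorem trans {p' : List (ℝ × ℝ)} (h : WeaklyAbove p p') (h' : WeaklyAbove p' q) :
    WeaklyAbove p q :=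
  ⟨h.1.trans h'.1, fun t _ => (h.le t).trans (h'.le t)⟩

end WeaklyAbove

theorem topPath_weaklyAbove_left (h : p.length = q.length) : WeaklyAbove (topPath p q) p :=
  ⟨length_topPath h, fun r _ => by rw [pt_topPath h]; exact min_le_left _ _⟩

theorem topPath_weaklyAbove_right (h : p.length = q.length) : WeaklyAbove (topPath p q) q :=
  ⟨(length_topPath h).trans h, fun r _ => by rw [pt_topPath h]; exact min_le_right _ _⟩

theorem replace1_set {u v : ℝ × ℝ} (hr : r < p.length) (hu : pt p r = u) :
    Replace1 p (p.set r v) u v :=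
  ⟨r, hr, hu, List.length_set, pt_set_self hr, fun _ _ hsr => pt_set_of_ne hsr.symm⟩

theorem replace2_set_set {u u' v v' : ℝ × ℝ} (hr : r < p.length) (hs : s < p.length)
    (hrs : r ≠ s) (hu : pt p r = u) (hv : pt p s = v) :
    Replace2 p ((p.set r u').set s v') u u' v v' := by
  refine ⟨r, s, hr, hs, hrs, hu, hv, by simp, ?_, pt_set_self (by simpa using hs),
    fun t _ htr hts => ?_⟩
  · rw [pt_set_of_ne hrs.symm, pt_set_self hr]
  · rw [pt_set_of_ne hts.symm, pt_set_of_ne htr.symm]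

end Points

/-! ### Connecting paths through their top -/

section Connectivity

variable {S : Setting} {i : ℕ} {k : ℤ} {p q r : List (ℝ × ℝ)} {ms ms' : List (Bool × (ℕ × ℤ))}

namespace MoveSeq

theorem append (h : MoveSeq S i k p q ms) (h' : MoveSeq S i k q r ms') :
    MoveSeq S i k p r (ms ++ ms') := by
  induction h with
  | nil => exact h'
  | lower hW hL _ ih => exact .lower hW hL (ih h')
  | raise hW hL _ ih => exact .raise hW hL (ih h')

theorem reverse (h : MoveSeq S i k p q ms) :
    MoveSeq S i k q p (ms.reverse.map fun m => (!m.1, m.2)) := by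
  induction h with
  | nil => exact .nil _
  | lower hW hL _ ih =>
    rw [List.reverse_cons, List.map_append]
    exact ih.append (.raise hW hL (.nil _))
  | raise hW hL _ ih =>
    rw [List.reverse_cons, List.map_append]
    exact ih.append (.lower hW hL (.nil _))

end MoveSeq

/-- The site `s`, moved by the point with index `pos s`, lies between `p` and `q`: at that index
`p` is at least one unit above the height of `s`, and `q` at least one unit below it. (Heights
increase downwards.) -/
def Separates (pos : ℕ × ℤ → ℕ) (s : ℕ × ℤ) (p q : List (ℝ × ℝ)) : Prop :=
  (pt p (pos s)).2 + 1 ≤ s.2 ∧ (s.2 : ℝ) + 1 ≤ (pt q (pos s)).2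

theorem Separates.mono {pos : ℕ × ℤ → ℕ} {s : ℕ × ℤ} {p p' q q' : List (ℝ × ℝ)}
    (h : Separates pos s p' q') (hp : WeaklyAbove p p') (hq : WeaklyAbove q' q) :
    Separates pos s p q :=
  ⟨by linarith [h.1, hp.le (pos s)], by linarith [h.2, hq.le (pos s)]⟩

theorem not_separates_topPath {pos : ℕ × ℤ → ℕ} {s : ℕ × ℤ} (h : p.length = q.length)
    (hp : Separates pos s (topPath p q) p) (hq : Separates pos s (topPath p q) q) : False := by
  have htop := hp.1
  rw [pt_topPath h] at htop
  rcases min_choice (pt p (pos s)).2 (pt q (pos s)).2 with hmin | hmin <;>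
    linarith [hp.2, hq.2]

/-- From `p ≤ q` in `𝒫_{i,k}` a single lowering move leads one step down from `p` towards `q`. -/
def LowersTowards (S : Setting) (i : ℕ) (k : ℤ) (pos : ℕ × ℤ → ℕ) (p q : List (ℝ × ℝ)) : Prop :=
  ∃ s ∈ W S, ∃ p', LoweredTo S i k s.1 s.2 p p' ∧ WeaklyAbove p p' ∧ WeaklyAbove p' q ∧
    Separates pos s p p'

/-- The total height, rounded down at each point, that `p` has to descend to reach `q`. -/
noncomputable def heightGap (p q : List (ℝ × ℝ)) : ℕ :=
  ∑ r ∈ Finset.range p.length, ⌊(pt q r).2 - (pt p r).2⌋₊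

theorem heightGap_lt_heightGap {pos : ℕ × ℤ → ℕ} {s : ℕ × ℤ} {p' : List (ℝ × ℝ)}
    (hpp' : WeaklyAbove p p') (hp'q : WeaklyAbove p' q) (hs : Separates pos s p p') :
    heightGap p' q < heightGap p q := by
  have hpos : pos s < p.length := by
    by_contra! hlen
    have h := hs
    rw [Separates, pt_of_length_le hlen, pt_of_length_le (hpp'.1 ▸ hlen)] at h
    linarith [h.1, h.2]
  rw [heightGap, heightGap, ← hpp'.1]
  refine Finset.sum_lt_sum (fun r _ => Nat.floor_mono (by linarith [hpp'.le r]))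
    ⟨pos s, Finset.mem_range.2 hpos, ?_⟩
  rw [← Nat.succ_le_iff, Nat.succ_eq_add_one,
    ← Nat.floor_add_one (sub_nonneg.2 (hp'q.le (pos s)))]
  exact Nat.floor_mono (by linarith [hs.1, hs.2])

theorem exists_lowering_moveSeq {pos : ℕ × ℤ → ℕ}
    (hstep : ∀ p ∈ P S i k, ∀ q ∈ P S i k, WeaklyAbove p q → p ≠ q →
      LowersTowards S i k pos p q)
    (hp : p ∈ P S i k) (hq : q ∈ P S i k) (hpq : WeaklyAbove p q) :
    ∃ ms, MoveSeq S i k p q ms ∧ ∀ m ∈ ms, m.1 = true ∧ Separates pos m.2 p q := by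
  induction hgap : heightGap p q using Nat.strong_induction_on generalizing p with
  | _ gap ih =>
    by_cases hne : p = q
    · exact ⟨[], hne ▸ .nil p, by simp⟩
    obtain ⟨s, hsW, p', hlow, hpp', hp'q, hsep⟩ := hstep p hp q hq hpq hne
    obtain ⟨ms, hms, hsites⟩ :=
      ih _ (hgap ▸ heightGap_lt_heightGap hpp' hp'q hsep) hlow.2.1 hp'q rfl
    refine ⟨(true, s) :: ms, .lower hsW hlow hms, fun m hm => ?_⟩
    rcases List.mem_cons.1 hm with rfl | hm
    · exact ⟨rfl, hsep.mono (.refl p) hp'q⟩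
    · exact ⟨(hsites m hm).1, (hsites m hm).2.mono hpp' (.refl q)⟩

/-- `p` is connected to `q` in `𝒫_{i,k}` by moves without cancellation. -/
def ConnectedWithoutCancellation (S : Setting) (i : ℕ) (k : ℤ) (p q : List (ℝ × ℝ)) : Prop :=
  ∃ ms, MoveSeq S i k p q ms ∧ ∀ s, ¬((true, s) ∈ ms ∧ (false, s) ∈ ms)

/-- Raise `q` to `top(p, q)`, then lower it to `p`: at every point the top agrees with `p` or with
`q`, so no site separates it from both. -/
theorem connectedWithoutCancellation_of_lowersTowards {pos : ℕ × ℤ → ℕ}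
    (hlen : ∀ p ∈ P S i k, ∀ q ∈ P S i k, p.length = q.length)
    (htop : ∀ p ∈ P S i k, ∀ q ∈ P S i k, topPath p q ∈ P S i k)
    (hstep : ∀ p ∈ P S i k, ∀ q ∈ P S i k, WeaklyAbove p q → p ≠ q →
      LowersTowards S i k pos p q)
    (hp : p ∈ P S i k) (hq : q ∈ P S i k) :
    ConnectedWithoutCancellation S i k q p := by
  have hpq := hlen p hp q hq
  obtain ⟨down, hdown, hdownSites⟩ := exists_lowering_moveSeq hstep (htop p hp q hq) hp
    (topPath_weaklyAbove_left hpq)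
  obtain ⟨up, hup, hupSites⟩ := exists_lowering_moveSeq hstep (htop p hp q hq) hq
    (topPath_weaklyAbove_right hpq)
  refine ⟨_, hup.reverse.append hdown, fun s ⟨hlower, hraise⟩ => ?_⟩
  have hs_down : (true, s) ∈ down := by
    rcases List.mem_append.1 hlower with h | h
    · obtain ⟨m, hm, heq⟩ := List.mem_map.1 h
      simp [(hupSites m (List.mem_reverse.1 hm)).1] at heq
    · exact h
  have hs_up : (true, s) ∈ up := by
    rcases List.mem_append.1 hraise with h | h
    · obtain ⟨⟨_ | _, t⟩, hm, _⟩ := List.mem_map.1 h <;> simp_all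
    · simpa using (hdownSites _ h).1
  exact not_separates_topPath hpq (hdownSites _ hs_down).2 (hupSites _ hs_up).2

end Connectivity

/-! ### Step paths -/

section StepPaths

theorem abs_min_sub_min_eq {f f' g g' c : ℝ} (hf : |f' - f| = c) (hg : |g' - g| = c)
    (h : f = g ∨ 2 * c ≤ |f - g|) : |min f' g' - min f g| = c := by
  rcases h with rfl | h
  · rw [min_self]
    rcases min_choice f' g' with e | e <;> rwa [e]
  obtain ⟨hf₁, hf₂⟩ := abs_le.1 hf.le
  obtain ⟨hg₁, hg₂⟩ := abs_le.1 hg.le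
  rcases le_abs'.1 h with h | h
  · rwa [min_eq_left (by linarith : f' ≤ g'), min_eq_left (by linarith [abs_nonneg (f' - f)])]
  · rwa [min_eq_right (by linarith : g' ≤ f'), min_eq_right (by linarith [abs_nonneg (f' - f)])]

theorem eq_add_of_abs_sub_eq {f f' g g' c : ℝ} (hf : |f' - f| = c) (hg : |g' - g| = c)
    (hlt : f < g) (hle : f' ≤ g') (hmin : f' ≠ g' → f ≤ f') : f' = f + c := by
  have hc : 0 ≤ c := hf ▸ abs_nonneg _
  rcases (abs_eq hc).1 hf with h | h
  · linarith
  rcases hle.eq_or_lt with heq | hlt'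
  · linarith [(abs_le.1 hg.le).1]
  · linarith [hmin hlt'.ne]

/-- A lattice path with `m` steps, starting at height `h`, whose `r`-th point lies in column `x r`
and whose `r`-th step changes the height by `± c r`. -/
structure IsStepPath (m : ℕ) (x c : ℕ → ℝ) (h : ℝ) (p : List (ℝ × ℝ)) : Prop where
  length_eq : p.length = m + 1
  fst_eq : ∀ r ≤ m, (pt p r).1 = x r
  height_zero : (pt p 0).2 = h
  abs_step : ∀ r < m, |(pt p (r + 1)).2 - (pt p r).2| = c r

namespace IsStepPath

variable {m r : ℕ} {x c : ℕ → ℝ} {h d : ℝ} {p q : List (ℝ × ℝ)}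

theorem length_eq_length (hp : IsStepPath m x c h p) (hq : IsStepPath m x c h q) :
    p.length = q.length :=
  hp.length_eq.trans hq.length_eq.symm

theorem pt_eq (hp : IsStepPath m x c h p) (hr : r ≤ m) : pt p r = (x r, (pt p r).2) :=
  Prod.ext (hp.fst_eq r hr) rfl

theorem exists_height_eq (hp : IsStepPath m x c h p) (hr : r ≤ m) (hc : ∀ s < r, c s = d) :
    ∃ k : ℤ, (pt p r).2 = h + d * (r + 2 * k) := by
  induction r with
  | zero => exact ⟨0, by simpa using hp.height_zero⟩
  | succ r ih =>
    obtain ⟨k, hk⟩ := ih (by lia) fun s hs => hc s (by lia)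
    have hstep := hp.abs_step r hr
    rw [hc r r.lt_succ_self] at hstep
    have hd : 0 ≤ d := hstep ▸ abs_nonneg _
    rcases (abs_eq hd).1 hstep with e | e
    · exact ⟨k, by push_cast; linarith⟩
    · exact ⟨k - 1, by push_cast; linarith⟩

theorem height_eq_or_le_abs_sub (hp : IsStepPath m x c h p) (hq : IsStepPath m x c h q)
    (hr : r ≤ m) (hc : ∀ s < r, c s = d) :
    (pt p r).2 = (pt q r).2 ∨ 2 * d ≤ |(pt p r).2 - (pt q r).2| := by
  obtain ⟨k, hk⟩ := hp.exists_height_eq hr hc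
  obtain ⟨l, hl⟩ := hq.exists_height_eq hr hc
  rcases eq_or_ne k l with rfl | hkl
  · exact Or.inl (hk.trans hl.symm)
  right
  have hone : (1 : ℝ) ≤ |(k : ℝ) - l| := by exact_mod_cast Int.one_le_abs (sub_ne_zero.2 hkl)
  calc 2 * d ≤ |2 * d| * 1 := by rw [mul_one]; exact le_abs_self _
    _ ≤ |2 * d| * |(k : ℝ) - l| := by gcongr
    _ = |(pt p r).2 - (pt q r).2| := by rw [← abs_mul, hk, hl]; congr 1; ring

theorem topPath (hp : IsStepPath m x c h p) (hq : IsStepPath m x c h q)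
    (hc : ∀ r, r + 1 < m → c r = d) (hd : ∀ r < m, c r ≤ d) :
    IsStepPath m x c h (topPath p q) where
  length_eq := (length_topPath (hp.length_eq_length hq)).trans hp.length_eq
  fst_eq r hr := by rw [pt_topPath (hp.length_eq_length hq)]; exact hp.fst_eq r hr
  height_zero := by
    rw [pt_topPath (hp.length_eq_length hq), hp.height_zero, hq.height_zero, min_self]
  abs_step r hr := by
    rw [pt_topPath (hp.length_eq_length hq), pt_topPath (hp.length_eq_length hq)]
    refine abs_min_sub_min_eq (hp.abs_step r hr) (hq.abs_step r hr) ?_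
    refine (hp.height_eq_or_le_abs_sub hq hr.le fun s hs => hc s (by lia)).imp_right fun h => ?_
    linarith [hd r hr]

theorem exists_highest_ne (hp : IsStepPath m x c h p) (hq : IsStepPath m x c h q)
    (hne : p ≠ q) :
    ∃ r < m, (pt p (r + 1)).2 ≠ (pt q (r + 1)).2 ∧
      ∀ s ≤ m, (pt p s).2 ≠ (pt q s).2 → (pt p (r + 1)).2 ≤ (pt p s).2 := by
  let D := {s ∈ Finset.range (m + 1) | (pt p s).2 ≠ (pt q s).2}
  have hD : D.Nonempty := by
    by_contra! hempty
    refine hne (ext_pt (hp.length_eq_length hq) fun s hs => ?_)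
    rw [hp.length_eq] at hs
    refine Prod.ext ((hp.fst_eq s (by lia)).trans (hq.fst_eq s (by lia)).symm) ?_
    by_contra hs'
    exact Finset.eq_empty_iff_forall_notMem.1 hempty s
      (Finset.mem_filter.2 ⟨Finset.mem_range.2 hs, hs'⟩)
  obtain ⟨s, hsD, hmin⟩ := D.exists_min_image (fun s => (pt p s).2) hD
  obtain ⟨hs, hsne⟩ := Finset.mem_filter.1 hsD
  rw [Finset.mem_range] at hs
  obtain _ | r := s
  · exact absurd (hp.height_zero.trans hq.height_zero.symm) hsne
  exact ⟨r, by lia, hsne, fun s hs' hne' =>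
    hmin s (Finset.mem_filter.2 ⟨Finset.mem_range.2 (by lia), hne'⟩)⟩

/-- Among the points at which `p` and `q` differ, the highest point of `p` is an upper corner. -/
theorem exists_corner (hp : IsStepPath m x c h p) (hq : IsStepPath m x c h q)
    (hc : ∀ r, r + 1 < m → c r = d) (hd : ∀ r < m, c r ≤ d)
    (hpq : WeaklyAbove p q) (hne : p ≠ q) :
    ∃ r < m, (pt p r).2 = (pt p (r + 1)).2 + c r ∧
      (r + 1 < m → (pt p (r + 2)).2 = (pt p (r + 1)).2 + c (r + 1)) ∧
      (pt p (r + 1)).2 + 2 * c r ≤ (pt q (r + 1)).2 := by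
  obtain ⟨r, hr, hrne, hmin⟩ := hp.exists_highest_ne hq hne
  have hlt := (hpq.le (r + 1)).lt_of_ne hrne
  have hbefore : (pt p r).2 = (pt p (r + 1)).2 + c r :=
    eq_add_of_abs_sub_eq (by rw [abs_sub_comm]; exact hp.abs_step r hr)
      (by rw [abs_sub_comm]; exact hq.abs_step r hr) hlt (hpq.le r) (hmin r hr.le)
  refine ⟨r, hr, hbefore, fun hr' => eq_add_of_abs_sub_eq (hp.abs_step (r + 1) hr')
    (hq.abs_step (r + 1) hr') hlt (hpq.le _) (hmin (r + 2) hr'), ?_⟩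
  have hcr : 0 ≤ c r := hp.abs_step r hr ▸ abs_nonneg _
  rcases hp.height_eq_or_le_abs_sub hq hr.le fun s hs => hc s (by lia) with heq | hgap
  · rcases (abs_eq hcr).1 (hq.abs_step r hr) with h | h
    · linarith
    · exact absurd (by linarith) hrne
  · rw [abs_sub_comm, abs_of_nonneg (sub_nonneg.2 (hpq.le r))] at hgap
    linarith [hd r hr, (abs_le.1 (hq.abs_step r hr).le).1]

theorem set (hp : IsStepPath m x c h p) {y : ℝ} (hy : |y - (pt p r).2| = c r)
    (hy' : r + 1 < m → |(pt p (r + 2)).2 - y| = c (r + 1)) (hr : r < m) :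
    IsStepPath m x c h (p.set (r + 1) (x (r + 1), y)) where
  length_eq := by rw [List.length_set, hp.length_eq]
  fst_eq s hs := by
    rcases eq_or_ne (r + 1) s with rfl | hne
    · rw [pt_set_self (by rw [hp.length_eq]; lia)]
    · rw [pt_set_of_ne hne, hp.fst_eq s hs]
  height_zero := by rw [pt_set_of_ne r.succ_ne_zero, hp.height_zero]
  abs_step s hs := by
    rcases eq_or_ne s r with rfl | hsr
    · rwa [pt_set_self (by rw [hp.length_eq]; lia), pt_set_of_ne (by lia)]
    rcases eq_or_ne s (r + 1) with rfl | hsr'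
    · rw [pt_set_self (by rw [hp.length_eq]; lia), pt_set_of_ne (by lia)]
      exact hy' hs
    · rw [pt_set_of_ne (by lia), pt_set_of_ne (by lia), hp.abs_step s hs]

theorem set_set_last (hp : IsStepPath (r + 2) x c h p) {y z : ℝ} (hy : |y - (pt p r).2| = c r)
    (hz : |z - y| = c (r + 1)) :
    IsStepPath (r + 2) x c h
      ((p.set (r + 1) (x (r + 1), y)).set (r + 2) (x (r + 2), z)) where
  length_eq := by rw [List.length_set, List.length_set, hp.length_eq]
  fst_eq s hs := by
    rcases eq_or_ne (r + 2) s with rfl | hne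
    · rw [pt_set_self (by rw [List.length_set, hp.length_eq]; lia)]
    rcases eq_or_ne (r + 1) s with rfl | hne'
    · rw [pt_set_of_ne hne, pt_set_self (by rw [hp.length_eq]; lia)]
    · rw [pt_set_of_ne hne, pt_set_of_ne hne', hp.fst_eq s hs]
  height_zero := by rw [pt_set_of_ne (by lia), pt_set_of_ne (by lia), hp.height_zero]
  abs_step s hs := by
    have hlen := hp.length_eq
    rcases eq_or_ne s (r + 1) with rfl | hsr'
    · rwa [pt_set_self (by rw [List.length_set]; lia), pt_set_of_ne (by lia),
        pt_set_self (by lia)]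
    rw [pt_set_of_ne (r := r + 2) (s := s + 1) (by lia),
      pt_set_of_ne (r := r + 2) (s := s) (by lia)]
    rcases eq_or_ne s r with rfl | hsr
    · rwa [pt_set_self (by lia), pt_set_of_ne (by lia)]
    · rw [pt_set_of_ne (by lia), pt_set_of_ne (by lia), hp.abs_step s hs]

end IsStepPath

end StepPaths

/-! ### Type A -/

section TypeA

variable {n i : ℕ} {k : ℤ} {p q : List (ℝ × ℝ)}

theorem mem_P_A_iff :
    p ∈ P (.A n) i k ↔
      IsStepPath (n + 1) (fun r => r) (fun _ => 1) (i + k) p ∧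
        (pt p (n + 1)).2 = n + 1 - i + k := by
  constructor
  · rintro ⟨hlen, hcol, hstart, hend, hstep⟩
    exact ⟨⟨hlen, fun r hr => hcol r (by lia), hstart,
      fun r hr => (abs_eq zero_le_one).2 (hstep r (by lia))⟩, hend⟩
  · rintro ⟨⟨hlen, hcol, hstart, hstep⟩, hend⟩
    exact ⟨hlen, fun r hr => hcol r (by lia), hstart, hend,
      fun r hr => (abs_eq zero_le_one).1 (hstep r (by lia))⟩

theorem canLower_A {j : ℕ} {y : ℤ} (hj₁ : 1 ≤ j) (hjn : j ≤ n) (hpt : pt p j = ((j : ℝ), (y : ℝ)))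
    (hprev : (pt p (j - 1)).2 = y + 1) (hnext : (pt p (j + 1)).2 = y + 1) :
    CanLower (.A n) p j (y + 1) := by
  refine ⟨⟨hj₁, hjn, ?_, ?_, ?_⟩, fun ⟨_, _, h, _⟩ => ?_⟩
  · simpa [rr] using hpt
  · simpa [rr] using hprev
  · simpa [rr] using hnext
  · have hy : (y : ℝ) = ((y + 1 + rr (.A n) j : ℤ) : ℝ) :=
      congrArg Prod.snd (hpt.symm.trans h)
    rw [rr, Int.cast_inj] at hy
    lia

theorem exists_corner_A (hik : (i, k) ∈ X (.A n)) (hp : p ∈ P (.A n) i k)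
    (hq : q ∈ P (.A n) i k) (hpq : WeaklyAbove p q) (hne : p ≠ q) :
    ∃ r < n, ∃ y : ℤ, (r + 1, y) ∈ X (.A n) ∧ (pt p (r + 1)).2 = y ∧ (pt p r).2 = y + 1 ∧
      (pt p (r + 2)).2 = y + 1 ∧ (y + 2 : ℝ) ≤ (pt q (r + 1)).2 := by
  obtain ⟨hpath, hend⟩ := mem_P_A_iff.1 hp
  obtain ⟨hqath, hqend⟩ := mem_P_A_iff.1 hq
  obtain ⟨r, hr, hprev, hnext, hroom⟩ :=
    hpath.exists_corner hqath (d := 1) (fun _ _ => rfl) (fun _ _ => le_rfl) hpq hne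
  have hrn : r < n := by
    by_contra! hrn
    obtain rfl : r = n := by lia
    linarith
  obtain ⟨t, ht⟩ := hpath.exists_height_eq (r := r + 1) (by lia) (fun _ _ => rfl)
  obtain ⟨y, hy, hyt⟩ : ∃ y : ℤ, (pt p (r + 1)).2 = y ∧ y = i + k + (r + 1 + 2 * t) :=
    ⟨_, by push_cast; rw [ht]; push_cast; ring, rfl⟩
  have hparity := hik.2.2
  refine ⟨r, hrn, y, ⟨by lia, hrn, by push_cast; lia⟩, hy, ?_, ?_, ?_⟩
  · rw [hprev, hy]
  · rw [hnext (by lia), hy]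
  · linarith

theorem lowersTowards_A (hik : (i, k) ∈ X (.A n)) (hp : p ∈ P (.A n) i k)
    (hq : q ∈ P (.A n) i k) (hpq : WeaklyAbove p q) (hne : p ≠ q) :
    LowersTowards (.A n) i k Prod.fst p q := by
  obtain ⟨r, hrn, y, hX, hy, hprev, hnext, hroom⟩ := exists_corner_A hik hp hq hpq hne
  obtain ⟨hpath, hend⟩ := mem_P_A_iff.1 hp
  have hpt : pt p (r + 1) = (((r + 1 : ℕ) : ℝ), (y : ℝ)) := by rw [hpath.pt_eq (by lia), hy]
  have hlen : r + 1 < p.length := by rw [hpath.length_eq]; lia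
  have hpath' : IsStepPath (n + 1) (fun r => r) (fun _ => 1) (i + k)
      (p.set (r + 1) (((r + 1 : ℕ) : ℝ), y + 2)) := by
    refine hpath.set ?_ (fun _ => ?_) (by lia)
    · rw [hprev]; norm_num [add_sub_add_left_eq_sub]
    · rw [hnext]; norm_num [add_sub_add_left_eq_sub]
  refine ⟨(r + 1, y + 1), ?_, p.set (r + 1) (((r + 1 : ℕ) : ℝ), y + 2), ⟨hp, ?_, ?_, ?_⟩,
    .set_right (by linarith), hpq.set_left hroom, ?_⟩
  · simpa [W, rr] using hX
  · exact mem_P_A_iff.2 ⟨hpath', by rw [pt_set_of_ne (by lia), hend]⟩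
  · exact canLower_A (by lia) hrn hpt hprev hnext
  · convert replace1_set hlen hpt using 2 <;> push_cast <;> ring
  · rw [Separates, pt_set_self hlen, hy]
    push_cast
    constructor <;> linarith

theorem connectedWithoutCancellation_A (hik : (i, k) ∈ X (.A n)) (hp : p ∈ P (.A n) i k)
    (hq : q ∈ P (.A n) i k) :
    ConnectedWithoutCancellation (.A n) i k q p := by
  refine connectedWithoutCancellation_of_lowersTowards (fun p hp q hq => hp.1.trans hq.1.symm)
    (fun p hp q hq => ?_) (fun p hp q hq => lowersTowards_A hik hp hq) hp hq
  obtain ⟨hpath, hend⟩ := mem_P_A_iff.1 hp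
  obtain ⟨hqath, hqend⟩ := mem_P_A_iff.1 hq
  refine mem_P_A_iff.2 ⟨hpath.topPath hqath (fun _ _ => rfl) (fun _ _ => le_rfl), ?_⟩
  rw [pt_topPath (hpath.length_eq_length hqath), hend, hqend, min_self]

end TypeA

/-! ### Type B: halves of paths -/

section TypeB

variable {n j r s : ℕ} {ε : ℝ} {l l' y : ℤ} {p p' a a' c g : List (ℝ × ℝ)}

/-- The column of the `r`-th point of the paths in `𝒫_{N,ℓ}`: they run towards the central column
`2N - 1` from the left if `ℓ ≡ 3 (mod 4)`, and from the right otherwise. -/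
def spinCol (n : ℕ) (l : ℤ) (r : ℕ) : ℤ :=
  if r < n then if l % 4 = 3 then 2 * r else 4 * n - 2 - 2 * r else 2 * n - 1

/-- The size of the `r`-th step of the paths in `𝒫_{N,ℓ}`. -/
noncomputable def spinStep (n : ℕ) (ε : ℝ) (r : ℕ) : ℝ := if r + 1 < n then 2 else 1 + ε

/-- The step paths making up `𝒫_{N,ℓ}`; see `mem_pathsBspin_iff`. -/
abbrev IsSpinPath (n : ℕ) (ε : ℝ) (l : ℤ) (a : List (ℝ × ℝ)) : Prop :=
  IsStepPath n (fun r => spinCol n l r) (spinStep n ε) (l + 2 * n - 1) a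

theorem spinCol_self : spinCol n l n = 2 * n - 1 := if_neg (lt_irrefl n)

theorem spinCol_inj (hr : r ≤ n) (hs : s ≤ n) (h : spinCol n l r = spinCol n l s) : r = s := by
  unfold spinCol at h
  split_ifs at h <;> lia

theorem spinCol_ne_spinCol (hl : l % 2 = 1) (hll' : (l' - l) % 4 = 2) (hr : r < n) (hs : s ≤ n) :
    spinCol n l r ≠ spinCol n l' s := by
  unfold spinCol
  split_ifs <;> lia

theorem iotaB_eq (hl : l % 2 = 1) (hj : j < n) (hy : (y - (l + 2 * n - 1 + 2 * j)) % 4 = 0) :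
    iotaB n (j, y) = (spinCol n l j, y) := by
  unfold iotaB spinCol
  split_ifs <;> simp only [Prod.mk.injEq, and_true] <;> lia

theorem mem_pathsBspin_iff (hn : 1 ≤ n) (hε : 0 < ε) :
    a ∈ pathsBspin n ε l ↔ IsSpinPath n ε l a := by
  have hε' : 0 ≤ 1 + ε := by linarith
  obtain ⟨m, rfl⟩ : ∃ m, n = m + 1 := ⟨n - 1, by lia⟩
  constructor
  · rintro ⟨hlen, hcol, hcenter, hstart, hstep, hlast⟩
    refine ⟨hlen, fun r hr => ?_, hstart, fun r hr => ?_⟩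
    · rcases hr.eq_or_lt with rfl | hr
      · rw [hcenter, spinCol_self]; push_cast; ring
      · unfold spinCol
        split_ifs at hcol ⊢ <;> simp [hcol r hr]
    · unfold spinStep
      split_ifs with h
      · exact (abs_eq zero_le_two).2 (hstep r h)
      · obtain rfl : r = m := by lia
        exact (abs_eq hε').2 hlast
  · rintro ⟨hlen, hcol, hstart, hstep⟩
    refine ⟨hlen, ?_, ?_, hstart, fun r hr => ?_, ?_⟩
    · split_ifs with hl <;> intro r hr <;> simp [hcol r hr.le, spinCol, hr, hl]
    · rw [hcol _ le_rfl, spinCol_self]; push_cast; ring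
    · exact (abs_eq zero_le_two).1 ((hstep r (by lia)).trans (if_pos hr))
    · exact (abs_eq hε').1 ((hstep m m.lt_succ_self).trans (if_neg (lt_irrefl _)))

theorem spinStep_le (hε : ε ≤ 1) : spinStep n ε r ≤ 2 := by
  unfold spinStep
  split_ifs <;> linarith

theorem spinStep_of_lt (hr : r + 1 < n) : spinStep n ε r = 2 := if_pos hr

theorem spinStep_of_le (hr : n ≤ r + 1) : spinStep n ε r = 1 + ε := if_neg (by lia)

theorem IsSpinPath.exists_int_height (ha : IsSpinPath n ε l a) (hr : r < n) :
    ∃ y : ℤ, (pt a r).2 = y ∧ (y - (l + 2 * n - 1 + 2 * r)) % 4 = 0 := by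
  obtain ⟨t, ht⟩ := ha.exists_height_eq hr.le fun s hs => spinStep_of_lt (by lia)
  exact ⟨l + 2 * n - 1 + 2 * (r + 2 * t), by rw [ht]; push_cast; ring, by lia⟩

theorem IsSpinPath.eq_pt_of_mem (ha : IsSpinPath n ε l a) {u : ℝ × ℝ} (hu : u ∈ a)
    (hr : r ≤ n) (hcol : u.1 = spinCol n l r) :
    u = pt a r := by
  obtain ⟨s, hs, rfl⟩ := mem_iff_exists_pt.1 hu
  rw [ha.length_eq] at hs
  rw [ha.fst_eq s (by lia)] at hcol
  obtain rfl : s = r := spinCol_inj (l := l) (by lia) hr (by exact_mod_cast hcol)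
  rfl

/-- The condition imposed by `LoweredTo` in type B on the lists `p` and `p'` alone, leaving out
that they are paths in a given `𝒫_{i,k}`. -/
def BMove (n : ℕ) (ε : ℝ) (j : ℕ) (l : ℤ) (p p' : List (ℝ × ℝ)) : Prop :=
  CanLower (.B n ε) p j l ∧
    if j = n then
      Replace1 p p' (2 * (n : ℝ) - 1, (l : ℝ) - 1 - ε) (2 * (n : ℝ) - 1, (l : ℝ) + 1 + ε)
    else if j = n - 1 then
      Replace2 p p'
        (((iotaB n (j, l - 2)).1 : ℝ), (l : ℝ) - 2) (((iotaB n (j, l - 2)).1 : ℝ), (l : ℝ) + 2)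
        (2 * (n : ℝ) - 1, (l : ℝ) - 1 + ε) (2 * (n : ℝ) - 1, (l : ℝ) + 1 - ε)
    else
      Replace1 p p'
        (((iotaB n (j, l - 2)).1 : ℝ), (l : ℝ) - 2) (((iotaB n (j, l - 2)).1 : ℝ), (l : ℝ) + 2)

theorem loweredTo_B_iff {i : ℕ} {k : ℤ} :
    LoweredTo (.B n ε) i k j l p p' ↔
      p ∈ P (.B n ε) i k ∧ p' ∈ P (.B n ε) i k ∧ BMove n ε j l p p' :=
  Iff.rfl

section Reverse

theorem mem_Cp_reverse {x : ℕ × ℤ} (h : x ∈ Cp (.B n ε) p true) :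
    x ∈ Cp (.B n ε) p.reverse true := by
  obtain ⟨hX, ⟨r, hr, hrlen, hpt, h₀, h₁, h₂, hprev, hnext⟩ | ⟨hxn, hmem, hnot⟩⟩ := h
  · refine ⟨hX, .inl ⟨p.length - 1 - r, by lia, by rw [List.length_reverse]; lia, ?_,
      h₀, h₁, h₂, ?_⟩⟩
    · rw [pt_reverse_sub (by lia), hpt]
    · rw [if_pos rfl, pt_reverse_sub (by lia),
        show p.length - 1 - r - 1 = p.length - 1 - (r + 1) by lia, pt_reverse_sub hrlen,
        show p.length - 1 - r + 1 = p.length - 1 - (r - 1) by lia, pt_reverse_sub (by lia)]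
      exact ⟨hnext, hprev⟩
  · exact ⟨hX, .inr ⟨hxn, List.mem_reverse.2 hmem, fun h => hnot (List.mem_reverse.1 h)⟩⟩

theorem CanLower.reverse (h : CanLower (.B n ε) p j l) : CanLower (.B n ε) p.reverse j l :=
  ⟨mem_Cp_reverse h.1, fun h' => h.2 (p.reverse_reverse ▸ mem_Cp_reverse h')⟩

theorem Replace1.reverse {u u' : ℝ × ℝ} (h : Replace1 p p' u u') :
    Replace1 p.reverse p'.reverse u u' := by
  obtain ⟨r, hr, hu, hlen, hu', hrest⟩ := h
  refine ⟨p.length - 1 - r, by rw [List.length_reverse]; lia, ?_, by simp [hlen], ?_,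
    fun s hs hsr => ?_⟩
  · rw [pt_reverse_sub hr, hu]
  · rw [← hlen, pt_reverse_sub (hlen ▸ hr), hu']
  · rw [List.length_reverse] at hs
    rw [pt_reverse (by lia), pt_reverse hs, hlen, hrest _ (by lia) (by lia)]

theorem Replace2.reverse {u u' v v' : ℝ × ℝ} (h : Replace2 p p' u u' v v') :
    Replace2 p.reverse p'.reverse u u' v v' := by
  obtain ⟨r, t, hr, ht, hrt, hu, hv, hlen, hu', hv', hrest⟩ := h
  refine ⟨p.length - 1 - r, p.length - 1 - t, by rw [List.length_reverse]; lia,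
    by rw [List.length_reverse]; lia, by lia, ?_, ?_, by simp [hlen], ?_, ?_,
    fun s hs hsr hst => ?_⟩
  · rw [pt_reverse_sub hr, hu]
  · rw [pt_reverse_sub ht, hv]
  · rw [← hlen, pt_reverse_sub (hlen ▸ hr), hu']
  · rw [← hlen, pt_reverse_sub (hlen ▸ ht), hv']
  · rw [List.length_reverse] at hs
    rw [pt_reverse (by lia), pt_reverse hs, hlen, hrest _ (by lia) (by lia) (by lia)]

theorem BMove.reverse (h : BMove n ε j l p p') : BMove n ε j l p.reverse p'.reverse := by
  refine ⟨h.1.reverse, ?_⟩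
  have hrep := h.2
  split_ifs at hrep ⊢
  · exact hrep.reverse
  · exact hrep.reverse
  · exact hrep.reverse

end Reverse

theorem canLower_B_of_lt (hj : 1 ≤ j) (hjn : j < n) (hy : y % 2 = 0) (hr : 1 ≤ r)
    (hrlen : r + 1 < p.length) (hpt : pt p r = (((iotaB n (j, y)).1 : ℝ), (y : ℝ)))
    (hprev : (y : ℝ) < (pt p (r - 1)).2) (hnext : (y : ℝ) < (pt p (r + 1)).2)
    (hclear : (((iotaB n (j, y)).1 : ℝ), (y + 4 : ℝ)) ∉ p) :
    CanLower (.B n ε) p j (y + 2) := by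
  have hrr : (rr (.B n ε) j : ℤ) = 2 := by simp [rr, hjn.ne]
  have hiota (z : ℤ) : (iotaB n (j, z)).2 = z := by unfold iotaB; split_ifs <;> rfl
  have hiota_add : (iotaB n (j, y + 2 + 2)).1 = (iotaB n (j, y)).1 := by
    unfold iotaB; split_ifs <;> first | rfl | lia
  unfold CanLower
  rw [hrr, add_sub_cancel_right]
  refine ⟨⟨.inr ⟨hj, hjn, hy⟩, .inl ⟨r, hr, hrlen, by rw [hpt, hiota], ?_, ?_, ?_, ?_⟩⟩, ?_⟩
  · unfold iotaB; split_ifs <;> lia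
  · unfold iotaB; split_ifs <;> lia
  · unfold iotaB; split_ifs <;> lia
  · rw [if_pos rfl, hpt]
    exact ⟨hprev, hnext⟩
  · rintro ⟨-, ⟨t, -, ht, hpt', -⟩ | ⟨hjn', -⟩⟩
    · refine hclear (mem_iff_exists_pt.2 ⟨t, by lia, hpt'.trans ?_⟩)
      rw [hiota_add, hiota]
      push_cast
      congr 1
      ring
    · exact hjn.ne hjn'

theorem canLower_B_self (hy : y % 2 = 0)
    (hmem : (2 * (n : ℝ) - 1, y - 1 - ε) ∈ p) (hnot : (2 * (n : ℝ) - 1, y - 1 + ε) ∉ p)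
    (hclear : (2 * (n : ℝ) - 1, y + 1 - ε) ∉ p) : CanLower (.B n ε) p n y := by
  unfold CanLower
  simp only [rr, if_pos, Nat.cast_one]
  refine ⟨⟨.inl ⟨rfl, by lia⟩, .inr ⟨rfl, ?_⟩⟩, ?_⟩
  · push_cast
    exact ⟨hmem, hnot⟩
  · rintro ⟨-, ⟨t, -, -, -, -, h, -⟩ | ⟨-, h, -⟩⟩
    · exact h (by simp [iotaB])
    · push_cast at h
      exact hclear h

/-- A lowering move at `s` from `a` to `a'` within `𝒫_{N,ℓ}`, which remains a lowering move when
both paths are continued by the same list `c`, provided that `c` avoids the columns of `a` other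
than the central one, and in the central column the segment from the end of `a` to the end of
`a'`. -/
structure SpinMove (n : ℕ) (ε : ℝ) (l : ℤ) (s : ℕ × ℤ) (a a' : List (ℝ × ℝ)) : Prop where
  site_mem : s ∈ W (.B n ε)
  site_mod : (s.2 - (l + 2 * n + 1 + 2 * s.1)) % 4 = 0
  separates : Separates Prod.fst s a a'
  weaklyAbove : WeaklyAbove a a'
  isSpinPath : IsSpinPath n ε l a'
  bMove_append : ∀ c : List (ℝ × ℝ),
    (∀ u ∈ c, ∀ r < n, u.1 ≠ spinCol n l r) →
    (∀ u ∈ c, u.1 = spinCol n l n → u.2 < (pt a n).2 ∨ (pt a' n).2 < u.2) →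
    BMove n ε s.1 s.2 (a ++ c) (a' ++ c)

theorem SpinMove.fst_le {s : ℕ × ℤ} (h : SpinMove n ε l s a a') : s.1 ≤ n := by
  rcases h.site_mem with ⟨h, -⟩ | ⟨-, h, -⟩
  · exact h.le
  · exact h.le

theorem SpinMove.length_eq {s : ℕ × ℤ} (h : SpinMove n ε l s a a') : a.length = n + 1 :=
  h.weaklyAbove.1.trans h.isSpinPath.length_eq

theorem mem_W_B_of_lt (hj : 1 ≤ j) (hjn : j < n) (hy : y % 2 = 0) :
    (j, y + 2) ∈ W (.B n ε) := by
  refine .inr ⟨hj, hjn, ?_⟩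
  rw [rr, if_neg hjn.ne]
  lia

theorem IsSpinPath.notMem_append (ha : IsSpinPath n ε l a) {z z' : ℝ}
    (hc : ∀ u ∈ c, u.1 = spinCol n l n → u.2 < (pt a n).2 ∨ z' < u.2)
    (hz : (pt a n).2 < z) (hz' : z ≤ z') : (2 * (n : ℝ) - 1, z) ∉ a ++ c := by
  have hcol : 2 * (n : ℝ) - 1 = (spinCol n l n : ℤ) := by rw [spinCol_self]; push_cast; rfl
  intro hmem
  rcases List.mem_append.1 hmem with hmem | hmem
  · exact hz.ne (congrArg Prod.snd (ha.eq_pt_of_mem hmem le_rfl hcol)).symm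
  · rcases hc _ hmem hcol with h | h <;> linarith

section Moves

variable (ha : IsSpinPath n ε l a) (hl : l % 2 = 1)

include ha hl

theorem IsSpinPath.canLower_append (hr : r + 1 < n) (hy : (pt a (r + 1)).2 = y)
    (hymod : (y - (l + 2 * n - 1 + 2 * (r + 1 : ℕ))) % 4 = 0)
    (hprev : y < (pt a r).2) (hnext : y < (pt a (r + 2)).2)
    (hc : ∀ u ∈ c, ∀ r < n, u.1 ≠ spinCol n l r) :
    CanLower (.B n ε) (a ++ c) (r + 1) (y + 2) := by
  have hlen := ha.length_eq
  have hiota := iotaB_eq hl hr hymod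
  refine canLower_B_of_lt (r := r + 1) (by lia) hr (by lia) (by lia)
    (by rw [List.length_append]; lia) ?_ ?_ ?_ ?_
  · rw [pt_append_left (by lia), ha.pt_eq hr.le, hy, hiota]
  · rwa [pt_append_left (by lia)]
  · rwa [pt_append_left (by lia)]
  · rw [hiota, List.mem_append]
    rintro (hmem | hmem)
    · have := congrArg Prod.snd (ha.eq_pt_of_mem hmem hr.le rfl)
      rw [hy] at this
      linarith
    · exact hc _ hmem (r + 1) hr rfl

theorem IsSpinPath.spinMove_inner (hr : r + 2 < n) (hy : (pt a (r + 1)).2 = y)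
    (hymod : (y - (l + 2 * n - 1 + 2 * (r + 1 : ℕ))) % 4 = 0)
    (hprev : (pt a r).2 = y + 2) (hnext : (pt a (r + 2)).2 = y + 2) :
    SpinMove n ε l (r + 1, y + 2) a (a.set (r + 1) (spinCol n l (r + 1), y + 4)) where
  site_mem := mem_W_B_of_lt (by lia) (by lia) (by lia)
  site_mod := by push_cast at hymod ⊢; lia
  separates := by
    rw [Separates, pt_set_self (by rw [ha.length_eq]; lia), hy]
    push_cast
    constructor <;> linarith
  weaklyAbove := .set_right (by linarith)
  isSpinPath := by
    refine ha.set ?_ (fun _ => ?_) (by lia)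
    · rw [hprev, spinStep_of_lt (by lia)]; norm_num [add_sub_add_left_eq_sub]
    · rw [hnext, spinStep_of_lt (by lia)]; norm_num [add_sub_add_left_eq_sub]
  bMove_append c hc _ := by
    refine ⟨ha.canLower_append hl (by lia) hy hymod (by linarith) (by linarith) hc, ?_⟩
    have hlen := ha.length_eq
    rw [if_neg (by lia), if_neg (by lia), ← List.set_append_left _ _ (by lia)]
    simp only [add_sub_cancel_right, iotaB_eq hl (by lia : r + 1 < n) hymod]
    have := replace1_set (p := a ++ c) (r := r + 1) (v := ((spinCol n l (r + 1) : ℝ), (y + 4 : ℝ)))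
      (by rw [List.length_append]; lia) (pt_append_left (by lia))
    rw [ha.pt_eq (by lia), hy] at this
    convert this using 2 <;> push_cast <;> ring

theorem IsSpinPath.spinMove_penultimate (hr : r + 2 = n) (hy : (pt a (r + 1)).2 = y)
    (hymod : (y - (l + 2 * n - 1 + 2 * (r + 1 : ℕ))) % 4 = 0) (hε : 0 < ε) (hε₁ : ε ≤ 1)
    (hprev : (pt a r).2 = y + 2) (hnext : (pt a (r + 2)).2 = y + 1 + ε) :
    SpinMove n ε l (r + 1, y + 2) a ((a.set (r + 1) (spinCol n l (r + 1), y + 4)).set (r + 2)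
      (spinCol n l n, y + 3 - ε)) where
  site_mem := mem_W_B_of_lt (by lia) (by lia) (by lia)
  site_mod := by push_cast at hymod ⊢; lia
  separates := by
    rw [Separates, pt_set_of_ne (by lia), pt_set_self (by rw [ha.length_eq]; lia), hy]
    push_cast
    constructor <;> linarith
  weaklyAbove := by
    refine .trans (.set_right (by linarith)) (.set_right ?_)
    rw [pt_set_of_ne (by lia)]
    linarith
  isSpinPath := by
    subst hr
    refine ha.set_set_last ?_ ?_
    · rw [hprev, spinStep_of_lt (by lia)]; norm_num [add_sub_add_left_eq_sub]
    · rw [spinStep_of_le (by lia), abs_of_nonpos (by linarith)]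
      ring
  bMove_append c hc _ := by
    refine ⟨ha.canLower_append hl (by lia) hy hymod (by linarith) (by linarith) hc, ?_⟩
    subst hr
    have hlen := ha.length_eq
    rw [if_neg (by lia), if_pos (by lia), ← List.set_append_left _ _ (by simp; lia),
      ← List.set_append_left _ _ (by lia)]
    simp only [add_sub_cancel_right, iotaB_eq hl (by lia : r + 1 < r + 2) hymod]
    have := replace2_set_set (p := a ++ c) (r := r + 1) (s := r + 2)
      (u' := ((spinCol (r + 2) l (r + 1) : ℝ), (y + 4 : ℝ)))
      (v' := ((spinCol (r + 2) l (r + 2) : ℝ), (y + 3 - ε : ℝ)))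
      (by rw [List.length_append]; lia) (by rw [List.length_append]; lia) (by lia)
      (pt_append_left (by lia)) (pt_append_left (by lia))
    rw [ha.pt_eq (by lia), ha.pt_eq (r := r + 2) (by lia), hy, hnext, spinCol_self] at this
    rw [spinCol_self]
    convert this using 2 <;> push_cast <;> ring

theorem IsSpinPath.spinMove_last (hr : r + 1 = n) (hy : (pt a r).2 = y)
    (hymod : (y - (l + 2 * n - 1 + 2 * r)) % 4 = 0) (hε : 0 < ε)
    (hnext : (pt a (r + 1)).2 = y - 1 - ε) :
    SpinMove n ε l (r + 1, y) a (a.set (r + 1) (spinCol n l (r + 1), y + 1 + ε)) where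
  site_mem := by
    refine .inl ⟨hr, ?_⟩
    rw [rr, if_pos hr]
    lia
  site_mod := by push_cast at hymod ⊢; lia
  separates := by
    rw [Separates, pt_set_self (by rw [ha.length_eq]; lia), hnext]
    constructor <;> linarith
  weaklyAbove := .set_right (by linarith)
  isSpinPath := by
    refine ha.set ?_ (fun h => absurd h (by lia)) (by lia)
    rw [hy, spinStep_of_le (by lia), abs_of_nonneg (by linarith)]
    ring
  bMove_append c _ hc := by
    subst hr
    have hlen := ha.length_eq
    have hend : pt (a ++ c) (r + 1) = (2 * ((r + 1 : ℕ) : ℝ) - 1, y - 1 - ε) := by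
      rw [pt_append_left (by lia), ha.pt_eq le_rfl, hnext, spinCol_self]
      push_cast
      rfl
    rw [pt_set_self (by lia)] at hc
    refine ⟨canLower_B_self (by lia) ?_ (ha.notMem_append hc (by linarith) (by linarith))
      (ha.notMem_append hc (by linarith) (by linarith)), ?_⟩
    · exact mem_iff_exists_pt.2 ⟨r + 1, by rw [List.length_append]; lia, hend⟩
    · rw [if_pos rfl, ← List.set_append_left _ _ (by lia), spinCol_self]
      convert replace1_set (by rw [List.length_append]; lia) hend using 3
      push_cast
      rfl

end Moves

theorem IsSpinPath.exists_spinMove (ha : IsSpinPath n ε l a) (hg : IsSpinPath n ε l g)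
    (hl : l % 2 = 1) (hε : 0 < ε) (hε₁ : ε ≤ 1) (hag : WeaklyAbove a g) (hne : a ≠ g) :
    ∃ s a', SpinMove n ε l s a a' ∧ WeaklyAbove a' g := by
  obtain ⟨r, hr, hprev, hnext, hroom⟩ :=
    ha.exists_corner hg (fun _ => spinStep_of_lt) (fun _ _ => spinStep_le hε₁) hag hne
  rcases eq_or_ne (r + 1) n with hrn | hrn
  · obtain ⟨y, hy, hymod⟩ := ha.exists_int_height hr
    rw [spinStep_of_le hrn.ge] at hprev hroom
    exact ⟨_, _, ha.spinMove_last hl hrn hy hymod hε (by linarith),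
      hag.set_left (by linarith)⟩
  obtain ⟨y, hy, hymod⟩ := ha.exists_int_height (by lia : r + 1 < n)
  have hnext := hnext (by lia)
  rw [spinStep_of_lt (by lia)] at hprev hroom
  rcases eq_or_ne (r + 2) n with hrn' | hrn'
  · rw [spinStep_of_le hrn'.ge] at hnext
    refine ⟨_, _, ha.spinMove_penultimate hl hrn' hy hymod hε hε₁ (by linarith) (by linarith),
      (hag.set_left (by linarith)).set_left ?_⟩
    have hstep := hg.abs_step (r + 1) (by lia)
    rw [spinStep_of_le hrn'.ge] at hstep
    linarith [(abs_le.1 hstep.le).1]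
  · rw [spinStep_of_lt (by lia)] at hnext
    exact ⟨_, _, ha.spinMove_inner hl (by lia) hy hymod (by linarith) (by linarith),
      hag.set_left (by linarith)⟩

/-! ### Type B: connecting paths -/

section Spin

variable {k : ℤ}

theorem mem_P_B_self_iff (hn : 1 ≤ n) (hε : 0 < ε) :
    p ∈ P (.B n ε) n k ↔ IsSpinPath n ε k p := by
  rw [← mem_pathsBspin_iff hn hε, P, pathsB, if_pos rfl]

theorem connectedWithoutCancellation_B_self (hn : 1 ≤ n) (hε : 0 < ε) (hε₁ : ε ≤ 1)
    (hk : k % 2 = 1) (hp : p ∈ P (.B n ε) n k) (hp' : p' ∈ P (.B n ε) n k) :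
    ConnectedWithoutCancellation (.B n ε) n k p' p := by
  refine connectedWithoutCancellation_of_lowersTowards (pos := Prod.fst) ?_ ?_ ?_ hp hp' <;>
    simp only [mem_P_B_self_iff hn hε] <;> intro p hp q hq
  · exact hp.length_eq_length hq
  · exact hp.topPath hq (fun _ => spinStep_of_lt) fun _ _ => spinStep_le hε₁
  · intro hpq hne
    obtain ⟨s, p₁, hmove, hp₁q⟩ := hp.exists_spinMove hq hk hε hε₁ hpq hne
    refine ⟨s, hmove.site_mem, p₁, loweredTo_B_iff.2 ⟨?_, ?_, ?_⟩, hmove.weaklyAbove, hp₁q,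
      hmove.separates⟩
    · exact (mem_P_B_self_iff hn hε).2 hp
    · exact (mem_P_B_self_iff hn hε).2 hmove.isSpinPath
    · simpa using hmove.bMove_append [] (by simp) (by simp)

end Spin

section TwoBranches

variable {k : ℤ} {i : ℕ} {b b' a₁ b₁ : List (ℝ × ℝ)}

/-- The branches of a path `a ++ b.reverse` in `𝒫_{i,k}` with `i < N`: paths `a ∈ 𝒫_{N,ℓ}` and
`b ∈ 𝒫_{N,ℓ'}` such that `a` ends below `b` in the central column. -/
structure IsBranchPair (n : ℕ) (ε : ℝ) (l l' : ℤ) (a b : List (ℝ × ℝ)) : Prop where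
  left : IsSpinPath n ε l a
  right : IsSpinPath n ε l' b
  end_lt : (pt b n).2 < (pt a n).2

theorem mem_P_B_iff (hn : 1 ≤ n) (hε : 0 < ε) (hi : i ≠ n) :
    p ∈ P (.B n ε) i k ↔ ∃ a b, p = a ++ b.reverse ∧
      IsBranchPair n ε (k - (2 * n - 2 * i - 1)) (k + (2 * n - 2 * i - 1)) a b := by
  simp only [P, pathsB, if_neg hi, Set.mem_ofPred_eq, mem_pathsBspin_iff hn hε, sub_pos]
  refine exists_congr fun a => exists_congr fun b => ⟨?_, ?_⟩
  · rintro ⟨ha, hb, rfl, -, hlt⟩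
    exact ⟨rfl, ha, hb, hlt⟩
  · rintro ⟨rfl, ha, hb, hlt⟩
    exact ⟨ha, hb, rfl, by rw [ha.fst_eq n le_rfl, hb.fst_eq n le_rfl, spinCol_self, spinCol_self],
      hlt⟩

theorem IsBranchPair.topPath (h : IsBranchPair n ε l l' a b) (h' : IsBranchPair n ε l l' a' b')
    (hε₁ : ε ≤ 1) : IsBranchPair n ε l l' (topPath a a') (topPath b b') where
  left := h.left.topPath h'.left (fun _ => spinStep_of_lt) fun _ _ => spinStep_le hε₁
  right := h.right.topPath h'.right (fun _ => spinStep_of_lt) fun _ _ => spinStep_le hε₁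
  end_lt := by
    rw [pt_topPath (h.left.length_eq_length h'.left),
      pt_topPath (h.right.length_eq_length h'.right)]
    exact min_lt_min h.end_lt h'.end_lt

theorem pt_append_reverse (ha : a.length = n + 1) (hb : b.length = n + 1) (hr : r ≤ n) :
    pt (a ++ b.reverse) (2 * n + 1 - r) = pt b r := by
  rw [pt_append_right (by lia), ha, show 2 * n + 1 - r - (n + 1) = b.length - 1 - r by lia,
    pt_reverse_sub (by lia)]

/-- The index of the point of `a ++ b.reverse` moved at the site `s`: the residue modulo `4` tells
whether it belongs to the branch `a ∈ 𝒫_{N,ℓ}`. -/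
def branchPos (n : ℕ) (l : ℤ) (s : ℕ × ℤ) : ℕ :=
  if (s.2 - (l + 2 * n + 1 + 2 * s.1)) % 4 = 0 then s.1 else 2 * n + 1 - s.1

theorem IsSpinPath.fst_ne_spinCol (hb : IsSpinPath n ε l' b) (hl : l % 2 = 1)
    (hll' : (l' - l) % 4 = 2) {u : ℝ × ℝ} (hu : u ∈ b) (hr : r < n) : u.1 ≠ spinCol n l r := by
  obtain ⟨s, hs, rfl⟩ := mem_iff_exists_pt.1 hu
  rw [hb.length_eq] at hs
  rw [hb.fst_eq s (by lia)]
  exact_mod_cast (spinCol_ne_spinCol hl hll' hr (by lia)).symm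

theorem IsSpinPath.snd_eq_of_fst_eq (hb : IsSpinPath n ε l' b) {u : ℝ × ℝ} (hu : u ∈ b)
    (hcol : u.1 = spinCol n l n) : u.2 = (pt b n).2 := by
  rw [hb.eq_pt_of_mem hu le_rfl (by rw [hcol, spinCol_self, spinCol_self])]

theorem IsBranchPair.lowersTowards_left (hl : l % 2 = 1) (hll' : (l' - l) % 4 = 2)
    (hpair : ∀ {a b}, IsBranchPair n ε l l' a b → a ++ b.reverse ∈ P (.B n ε) i k)
    (h : IsBranchPair n ε l l' a b) {s : ℕ × ℤ} (hmove : SpinMove n ε l s a a₁)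
    (ha₁ : WeaklyAbove a₁ a') (hb : WeaklyAbove b b') :
    LowersTowards (.B n ε) i k (branchPos n l) (a ++ b.reverse) (a' ++ b'.reverse) := by
  have hend := hmove.weaklyAbove.le n
  have h₁ : IsBranchPair n ε l l' a₁ b :=
    ⟨hmove.isSpinPath, h.right, h.end_lt.trans_le hend⟩
  refine ⟨s, hmove.site_mem, a₁ ++ b.reverse,
    loweredTo_B_iff.2 ⟨hpair h, hpair h₁, hmove.bMove_append _ ?_ ?_⟩,
    hmove.weaklyAbove.append (.refl _), ha₁.append hb.reverse, ?_⟩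
  · exact fun u hu r => h.right.fst_ne_spinCol hl hll' (List.mem_reverse.1 hu)
  · refine fun u hu hcol => .inl ?_
    rw [h.right.snd_eq_of_fst_eq (List.mem_reverse.1 hu) hcol]
    exact h.end_lt
  · have hle := hmove.fst_le
    rw [Separates, branchPos, if_pos hmove.site_mod,
      pt_append_left (by rw [hmove.length_eq]; lia),
      pt_append_left (by rw [hmove.isSpinPath.length_eq]; lia)]
    exact hmove.separates

theorem IsBranchPair.lowersTowards_right (hl : l % 2 = 1) (hll' : (l' - l) % 4 = 2)
    (hpair : ∀ {a b}, IsBranchPair n ε l l' a b → a ++ b.reverse ∈ P (.B n ε) i k)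
    (h : IsBranchPair n ε l l' a b) {s : ℕ × ℤ} (hmove : SpinMove n ε l' s b b₁)
    (h₁ : IsBranchPair n ε l l' a b₁) (hb₁ : WeaklyAbove b₁ b') :
    LowersTowards (.B n ε) i k (branchPos n l) (a ++ b.reverse) (a ++ b'.reverse) := by
  have hbmove : BMove n ε s.1 s.2 (b ++ a.reverse) (b₁ ++ a.reverse) := by
    refine hmove.bMove_append _ ?_ ?_
    · exact fun u hu r => h.left.fst_ne_spinCol (by lia) (by lia) (List.mem_reverse.1 hu)
    · refine fun u hu hcol => .inr ?_
      rw [h.left.snd_eq_of_fst_eq (List.mem_reverse.1 hu) hcol]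
      exact h₁.end_lt
  refine ⟨s, hmove.site_mem, a ++ b₁.reverse,
    loweredTo_B_iff.2 ⟨hpair h, hpair h₁, by simpa using hbmove.reverse⟩,
    .append (.refl a) hmove.weaklyAbove.reverse, .append (.refl a) hb₁.reverse, ?_⟩
  have hmod := hmove.site_mod
  rw [Separates, branchPos, if_neg (by lia),
    pt_append_reverse h.left.length_eq hmove.length_eq hmove.fst_le,
    pt_append_reverse h.left.length_eq hmove.isSpinPath.length_eq hmove.fst_le]
  exact hmove.separates

/-- The branch `a` is lowered first: this keeps its end below that of `b`. -/
theorem IsBranchPair.lowersTowards_append (hε : 0 < ε) (hε₁ : ε ≤ 1) (hl : l % 2 = 1)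
    (hll' : (l' - l) % 4 = 2)
    (hpair : ∀ {a b}, IsBranchPair n ε l l' a b → a ++ b.reverse ∈ P (.B n ε) i k)
    (h : IsBranchPair n ε l l' a b) (h' : IsBranchPair n ε l l' a' b')
    (hpq : WeaklyAbove (a ++ b.reverse) (a' ++ b'.reverse))
    (hne : a ++ b.reverse ≠ a' ++ b'.reverse) :
    LowersTowards (.B n ε) i k (branchPos n l) (a ++ b.reverse) (a' ++ b'.reverse) := by
  obtain ⟨ha, hb⟩ := hpq.of_append (h.left.length_eq_length h'.left)
  have hb : WeaklyAbove b b' := by simpa using hb.reverse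
  rcases eq_or_ne a a' with rfl | haa'
  · have hbb' : b ≠ b' := by rintro rfl; exact hne rfl
    obtain ⟨s, b₁, hmove, hb₁⟩ :=
      h.right.exists_spinMove h'.right (by lia) hε hε₁ hb hbb'
    exact h.lowersTowards_right hl hll' hpair hmove
      ⟨h.left, hmove.isSpinPath, (hb₁.le n).trans_lt h'.end_lt⟩ hb₁
  · obtain ⟨s, a₁, hmove, ha₁⟩ := h.left.exists_spinMove h'.left hl hε hε₁ ha haa'
    exact h.lowersTowards_left hl hll' hpair hmove ha₁ hb

theorem connectedWithoutCancellation_B_of_ne (hn : 1 ≤ n) (hε : 0 < ε) (hε₁ : ε ≤ 1) (hi : i ≠ n)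
    (hk : k % 2 = 0) (hp : p ∈ P (.B n ε) i k) (hp' : p' ∈ P (.B n ε) i k) :
    ConnectedWithoutCancellation (.B n ε) i k p' p := by
  have hmem {p : List (ℝ × ℝ)} := mem_P_B_iff (k := k) (p := p) hn hε hi
  refine connectedWithoutCancellation_of_lowersTowards
    (pos := branchPos n (k - (2 * n - 2 * i - 1))) ?_ ?_ ?_ hp hp' <;> intro p hp q hq <;>
    obtain ⟨a, b, rfl, h⟩ := hmem.1 hp <;> obtain ⟨a', b', rfl, h'⟩ := hmem.1 hq
  · simp only [List.length_append, List.length_reverse, h.left.length_eq_length h'.left,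
      h.right.length_eq_length h'.right]
  · rw [topPath_append_reverse (h.left.length_eq_length h'.left)
      (h.right.length_eq_length h'.right)]
    exact hmem.2 ⟨_, _, rfl, h.topPath h' hε₁⟩
  · exact h.lowersTowards_append hε hε₁ (by lia) (by lia) (fun h => hmem.2 ⟨_, _, rfl, h⟩) h'

end TwoBranches

end TypeB

/-- any two paths `p, p' ∈ 𝒫_{i,k}` are connected by a finite sequence of
raising and lowering moves at points of `W` containing no inverse pair of moves: no point of
`W` occurs both as the site of a lowering move and as the site of a raising move. -/
theorem stmt5 (S : Setting) (hS : S.valid) (i : ℕ) (k : ℤ) (hik : (i, k) ∈ X S)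
    (p p' : List (ℝ × ℝ)) (hp : p ∈ P S i k) (hp' : p' ∈ P S i k) :
    ∃ ms : List (Bool × (ℕ × ℤ)), MoveSeq S i k p' p ms ∧
      ∀ jl : ℕ × ℤ, ¬((true, jl) ∈ ms ∧ (false, jl) ∈ ms) := by
  match S with
  | .A n => exact connectedWithoutCancellation_A hik hp hp'
  | .B n ε =>
    obtain ⟨hn, hε, hε₁⟩ := hS
    rcases hik with ⟨rfl, hk⟩ | ⟨-, hi, hk⟩
    · exact connectedWithoutCancellation_B_self (by lia) hε (by linarith) hk hp hp'
    · exact connectedWithoutCancellation_B_of_ne (by lia) hε (by linarith) hi.ne hk hp hp'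

end Paper
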